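/- Let α be a graph function and let v be a vertex with y_v > y_min. Let x_U = max{x_u : y_u < y_v} and U = {u : y_u < y_v and x_u = x_U}. Then there exist a vertex u' ∈ U and an edge (u',v') of G with v' ∉ U such that α^R_{u'v'} ≥ x_U and y_{v'} ≥ y_v. -/

import Mathlib

open Filter Topology

variable {V : Type*}

/-- Maximum weight of an edge leaving `v` (as a supremum over the finite edge set). -/
noncomputable def outMax (E : V → V → Prop) (α : V → V → ℝ) (v : V) : ℝ :=
  sSup {x : ℝ | ∃ w, E v w ∧ x = α v w}

/-- Maximum weight of an edge entering `v`. -/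
noncomputable def inMax (E : V → V → Prop) (α : V → V → ℝ) (v : V) : ℝ :=
  sSup {x : ℝ | ∃ u, E u v ∧ x = α u v}

/-- A graph function is balanced if the max outgoing weight equals the max incoming
weight at every vertex. -/
def IsBalancedGF (E : V → V → Prop) (α : V → V → ℝ) : Prop :=
  ∀ v, outMax E α v = inMax E α v

/-- Raising imbalance at `v`. -/
noncomputable def rhoR (E : V → V → Prop) (α : V → V → ℝ) (v : V) : ℝ :=
  max 0 (outMax E α v - inMax E α v)

/-- Lowering imbalance at `v`. -/
noncomputable def rhoL (E : V → V → Prop) (α : V → V → ℝ) (v : V) : ℝ :=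
  max 0 (inMax E α v - outMax E α v)

/-- A balancing operation at `v`: add `(α_v^out − α_v^in)/2` to every edge entering `v`
and subtract the same quantity from every edge leaving `v` (a self-loop is unchanged). -/
noncomputable def balanceAt [DecidableEq V] (E : V → V → Prop) (α : V → V → ℝ) (v : V) :
    V → V → ℝ :=
  fun a b =>
    α a b + (if b = v then (outMax E α v - inMax E α v) / 2 else 0)
          - (if a = v then (outMax E α v - inMax E α v) / 2 else 0)

/-- A raising operation at `v`: balance at `v` if the raising imbalance is positive,
otherwise do nothing. -/
noncomputable def raiseOp [DecidableEq V] (E : V → V → Prop) (α : V → V → ℝ) (v : V) :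
    V → V → ℝ :=
  if 0 < rhoR E α v then balanceAt E α v else α

/-- A lowering operation at `v`: balance at `v` if the lowering imbalance is positive,
otherwise do nothing. -/
noncomputable def lowerOp [DecidableEq V] (E : V → V → Prop) (α : V → V → ℝ) (v : V) :
    V → V → ℝ :=
  if 0 < rhoL E α v then balanceAt E α v else α

/-- A sequence of vertices is fair if every vertex appears infinitely often. -/
def Fair (σ : ℕ → V) : Prop := ∀ (v : V) (N : ℕ), ∃ t, N ≤ t ∧ σ t = v

/-- State after `t` raising operations along the sequence `σ`. -/
noncomputable def raiseIter [DecidableEq V] (E : V → V → Prop) (α : V → V → ℝ)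
    (σ : ℕ → V) : ℕ → V → V → ℝ
  | 0 => α
  | t + 1 => raiseOp E (raiseIter E α σ t) (σ t)

/-- State after `t` lowering operations along the sequence `σ`. -/
noncomputable def lowerIter [DecidableEq V] (E : V → V → Prop) (α : V → V → ℝ)
    (σ : ℕ → V) : ℕ → V → V → ℝ
  | 0 => α
  | t + 1 => lowerOp E (lowerIter E α σ t) (σ t)

/-- The raising vector: cumulative amount by which each vertex has been raised after
`t` raising operations along `σ`. -/
noncomputable def rvec [DecidableEq V] (E : V → V → Prop) (α : V → V → ℝ)
    (σ : ℕ → V) : ℕ → V → ℝ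
  | 0 => fun _ => 0
  | t + 1 => fun u =>
      rvec E α σ t u + (if u = σ t then rhoR E (raiseIter E α σ t) (σ t) / 2 else 0)

/-- State after performing raising operations along a finite list of vertices. -/
noncomputable def raiseList [DecidableEq V] (E : V → V → Prop) :
    (V → V → ℝ) → List V → V → V → ℝ
  | α, [] => α
  | α, v :: l => raiseList E (raiseOp E α v) l

/-- Raising vector accumulated along a finite list of raising operations. -/
noncomputable def rvecList [DecidableEq V] (E : V → V → Prop) :
    (V → V → ℝ) → List V → V → ℝ
  | _, [] => fun _ => 0
  | α, v :: l => fun u =>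
      (if u = v then rhoR E α v / 2 else 0) + rvecList E (raiseOp E α v) l u

/-- State after performing (unconditional) balancing operations along a list. -/
noncomputable def balList [DecidableEq V] (E : V → V → Prop) :
    (V → V → ℝ) → List V → V → V → ℝ
  | α, [] => α
  | α, v :: l => balList E (balanceAt E α v) l

/-- State after `t` balancing operations along the sequence `σ`. -/
noncomputable def balIter [DecidableEq V] (E : V → V → Prop) (α : V → V → ℝ)
    (σ : ℕ → V) : ℕ → V → V → ℝ
  | 0 => α
  | t + 1 => balanceAt E (balIter E α σ t) (σ t)

/-- Two graph functions are equivalent if their sums around every directed cycle agree. -/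
def Equivalent (E : V → V → Prop) (α γ : V → V → ℝ) : Prop :=
  ∀ (k : ℕ) (f : ZMod (k + 1) → V), (∀ i, E (f i) (f (i + 1))) →
    (∑ i, α (f i) (f (i + 1))) = ∑ i, γ (f i) (f (i + 1))

/-- The raising-balanced graph function determined by the limiting raising vector. -/
noncomputable def alphaR (α : V → V → ℝ) (rstar : V → ℝ) : V → V → ℝ :=
  fun u v => α u v + rstar v - rstar u

/-- Height of a vertex: `y_v = -r*_v`. -/
noncomputable def height (rstar : V → ℝ) (v : V) : ℝ := -rstar v

/-- Level of a vertex: maximum over incoming edges of `α^R`. -/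
noncomputable def level (E : V → V → Prop) (α : V → V → ℝ) (rstar : V → ℝ) (v : V) : ℝ :=
  inMax E (alphaR α rstar) v

/-- Momentum of a vertex: `m_v = max over edges (u,v) entering v of (α_{uv} − x_v)`. -/
noncomputable def momentum (E : V → V → Prop) (α : V → V → ℝ) (rstar : V → ℝ) (v : V) : ℝ :=
  sSup {c : ℝ | ∃ u, E u v ∧ c = α u v - level E α rstar v}

section helpers

variable [Fintype V]

lemma aux_out_finite (E : V → V → Prop) (α : V → V → ℝ) (v : V) :
    {x : ℝ | ∃ w, E v w ∧ x = α v w}.Finite :=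
  (Set.finite_range (fun w => α v w)).subset (by rintro x ⟨w, _, rfl⟩; exact ⟨w, rfl⟩)

lemma aux_in_finite (E : V → V → Prop) (α : V → V → ℝ) (v : V) :
    {x : ℝ | ∃ u, E u v ∧ x = α u v}.Finite :=
  (Set.finite_range (fun u => α u v)).subset (by rintro x ⟨w, _, rfl⟩; exact ⟨w, rfl⟩)

lemma aux_le_out (E : V → V → Prop) (α : V → V → ℝ) {v w : V} (h : E v w) :
    α v w ≤ outMax E α v :=
  le_csSup (aux_out_finite E α v).bddAbove ⟨w, h, rfl⟩

lemma aux_le_in (E : V → V → Prop) (α : V → V → ℝ) {u v : V} (h : E u v) :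
    α u v ≤ inMax E α v :=
  le_csSup (aux_in_finite E α v).bddAbove ⟨u, h, rfl⟩

lemma aux_out_att (E : V → V → Prop) (α : V → V → ℝ) (v : V) (h : ∃ w, E v w) :
    ∃ w, E v w ∧ outMax E α v = α v w := by
  obtain ⟨w, hw⟩ := h
  exact Set.Nonempty.csSup_mem (s := {x : ℝ | ∃ w, E v w ∧ x = α v w})
    ⟨_, w, hw, rfl⟩ (aux_out_finite E α v)

lemma aux_in_att (E : V → V → Prop) (α : V → V → ℝ) (v : V) (h : ∃ u, E u v) :
    ∃ u, E u v ∧ inMax E α v = α u v := by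
  obtain ⟨w, hw⟩ := h
  exact Set.Nonempty.csSup_mem (s := {x : ℝ | ∃ u, E u v ∧ x = α u v})
    ⟨_, w, hw, rfl⟩ (aux_in_finite E α v)

lemma aux_iter [DecidableEq V] (E : V → V → Prop) (α : V → V → ℝ) (σ : ℕ → V) (t : ℕ) :
    raiseIter E α σ t = alphaR α (rvec E α σ t) := by
  induction t with
  | zero => funext a b; simp [raiseIter, alphaR, rvec]
  | succ t ih =>
    funext a b
    have h0 : raiseIter E α σ t a b = α a b + rvec E α σ t b - rvec E α σ t a := by
      rw [ih]; rfl
    simp only [raiseIter, alphaR, rvec, raiseOp]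
    by_cases h : 0 < rhoR E (raiseIter E α σ t) (σ t)
    · have hr : rhoR E (raiseIter E α σ t) (σ t) =
          outMax E (raiseIter E α σ t) (σ t) - inMax E (raiseIter E α σ t) (σ t) := by
        unfold rhoR at h ⊢
        exact max_eq_right (le_of_lt (by simpa using h))
      rw [if_pos h, hr]
      simp only [balanceAt]
      rw [h0]
      ring
    · have hr : rhoR E (raiseIter E α σ t) (σ t) = 0 :=
        le_antisymm (not_lt.mp h) (le_max_left _ _)
      rw [if_neg h, h0, hr]
      simp

lemma aux_rvec_nonneg [DecidableEq V] (E : V → V → Prop) (α : V → V → ℝ) (σ : ℕ → V)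
    (t : ℕ) (u : V) : 0 ≤ rvec E α σ t u := by
  induction t with
  | zero => simp [rvec]
  | succ t ih =>
    simp only [rvec]
    have : 0 ≤ rhoR E (raiseIter E α σ t) (σ t) := le_max_left _ _
    split_ifs <;> linarith

lemma aux_least [DecidableEq V] (E : V → V → Prop)
    (hout : ∀ v, ∃ w, E v w) (hin : ∀ v, ∃ u, E u v)
    (α : V → V → ℝ) (σ : ℕ → V) (r : V → ℝ) (h0 : ∀ v, 0 ≤ r v)
    (hb : ∀ v w, E v w → ∃ u, E u v ∧ alphaR α r v w ≤ alphaR α r u v)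
    (t : ℕ) : ∀ u, rvec E α σ t u ≤ r u := by
  induction t with
  | zero => simpa [rvec] using h0
  | succ t ih =>
    intro u
    simp only [rvec]
    split_ifs with h
    · subst h
      rw [aux_iter]
      obtain ⟨w, hw, hwe⟩ := aux_out_att E (alphaR α (rvec E α σ t)) (σ t) (hout _)
      obtain ⟨p, hp, hpe⟩ := hb _ _ hw
      have h1 := aux_le_in E (alphaR α (rvec E α σ t)) hp
      have h2 := ih w
      have h3 := ih p
      have h4 := ih (σ t)
      unfold rhoR
      rw [hwe]
      have : max 0 (alphaR α (rvec E α σ t) (σ t) w - inMax E (alphaR α (rvec E α σ t)) (σ t))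
          ≤ 2 * (r (σ t) - rvec E α σ t (σ t)) := by
        apply max_le
        · linarith
        · simp only [alphaR] at h1 hpe ⊢
          linarith
      linarith
    · simpa using ih u

lemma aux_fair [Nonempty V] : ∃ σ : ℕ → V, Fair σ := by
  have hc : 0 < Fintype.card V := Fintype.card_pos
  refine ⟨fun t => (Fintype.equivFin V).symm ⟨t % Fintype.card V, Nat.mod_lt _ hc⟩, ?_⟩
  intro v N
  refine ⟨(Fintype.equivFin V v).1 + Fintype.card V * N, ?_, ?_⟩
  · nlinarith
  · rw [Equiv.symm_apply_eq]
    apply Fin.ext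
    simp only [Nat.add_mul_mod_self_left]
    exact Nat.mod_eq_of_lt (Fintype.equivFin V v).2

lemma aux_balanced [DecidableEq V] (E : V → V → Prop)
    (hin : ∀ v, ∃ u, E u v)
    (α : V → V → ℝ) (σ : ℕ → V) (hσ : Fair σ) (r : V → ℝ)
    (hr : ∀ v, Tendsto (fun t => rvec E α σ t v) atTop (nhds (r v))) :
    ∀ v w, E v w → ∃ u, E u v ∧ alphaR α r v w ≤ alphaR α r u v := by
  intro v w hvw
  obtain ⟨u, hu, hue⟩ := aux_in_att E (alphaR α r) v (hin v)
  refine ⟨u, hu, ?_⟩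
  by_contra hlt
  push Not at hlt
  set δ := alphaR α r v w - alphaR α r u v with hδ
  have hδ0 : 0 < δ := by linarith
  have hev : ∀ᶠ t in atTop, ∀ x, |rvec E α σ t x - r x| < δ / 16 := by
    rw [eventually_all]
    intro x
    have := (Metric.tendsto_nhds.mp (hr x)) (δ / 16) (by linarith)
    simpa [Real.dist_eq] using this
  obtain ⟨N, hN⟩ := eventually_atTop.mp hev
  obtain ⟨t, htN, htv⟩ := hσ v N
  have a1 := fun x => abs_lt.mp (hN t htN x)
  have a2 := fun x => abs_lt.mp (hN (t+1) (by omega) x)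
  have h1 := aux_le_out E (alphaR α (rvec E α σ t)) hvw
  obtain ⟨p, hp, hpe⟩ := aux_in_att E (alphaR α (rvec E α σ t)) v (hin v)
  have h2 := aux_le_in E (alphaR α r) hp
  have h3 : rvec E α σ (t+1) v = rvec E α σ t v
      + rhoR E (alphaR α (rvec E α σ t)) v / 2 := by
    simp only [rvec]
    rw [htv, if_pos rfl, aux_iter]
  have h4 : outMax E (alphaR α (rvec E α σ t)) v - inMax E (alphaR α (rvec E α σ t)) v
    ≤ rhoR E (alphaR α (rvec E α σ t)) v := le_max_right _ _
  have b1 := a1 v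
  have b2 := a1 w
  have b3 := a1 p
  have b4 := a2 v
  rw [hpe] at h4
  rw [hue] at h2
  simp only [alphaR] at *
  linarith [b1.1, b1.2, b2.1, b2.2, b3.1, b3.2, b4.1, b4.2]

end helpers

/-- If `y_v > y_min`, set `x_U = max{x_u : y_u < y_v}` and
`U = {u : y_u < y_v ∧ x_u = x_U}`. Then there are `u' ∈ U` and an edge `(u',v')`
with `v' ∉ U`, `α^R_{u'v'} ≥ x_U` and `y_{v'} ≥ y_v`. -/
theorem exists_escaping_edge
    [Fintype V] [Nonempty V] [DecidableEq V] (E : V → V → Prop)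
    (hout : ∀ v, ∃ w, E v w) (hin : ∀ v, ∃ u, E u v)
    (hconn : ∀ u v : V, Relation.ReflTransGen E u v)
    (α : V → V → ℝ) (rstar : V → ℝ)
    (hrstar : ∀ σ : ℕ → V, Fair σ → ∀ v,
      Tendsto (fun t => rvec E α σ t v) atTop (nhds (rstar v)))
    (v : V)
    (hv : Finset.univ.inf' Finset.univ_nonempty (height rstar) < height rstar v)
    (xU : ℝ)
    (hxU : xU = sSup {c : ℝ | ∃ u, height rstar u < height rstar v ∧
      c = level E α rstar u}) :
    ∃ u' v',
      (height rstar u' < height rstar v ∧ level E α rstar u' = xU) ∧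
      E u' v' ∧
      ¬(height rstar v' < height rstar v ∧ level E α rstar v' = xU) ∧
      xU ≤ alphaR α rstar u' v' ∧
      height rstar v ≤ height rstar v' := by
  classical
  obtain ⟨σ, hσ⟩ := aux_fair (V := V)
  have hbal := aux_balanced E hin α σ hσ rstar (hrstar σ hσ)
  have hr0 : ∀ u, 0 ≤ rstar u := fun u =>
    ge_of_tendsto' (hrstar σ hσ u) (fun t => aux_rvec_nonneg E α σ t u)
  have hfin : {c : ℝ | ∃ u, height rstar u < height rstar v ∧
      c = level E α rstar u}.Finite :=
    (Set.finite_range (level E α rstar)).subset (by rintro x ⟨w, _, rfl⟩; exact ⟨w, rfl⟩)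
  have hle : ∀ u, height rstar u < height rstar v → level E α rstar u ≤ xU := by
    intro u hu
    rw [hxU]
    exact le_csSup hfin.bddAbove ⟨u, hu, rfl⟩
  have hne : ∃ u, height rstar u < height rstar v ∧ level E α rstar u = xU := by
    obtain ⟨u, _, hu⟩ := (Finset.inf'_lt_iff _).mp hv
    obtain ⟨w, hw, hwe⟩ := Set.Nonempty.csSup_mem (s := {c : ℝ | ∃ u,
      height rstar u < height rstar v ∧ c = level E α rstar u}) ⟨_, u, hu, rfl⟩ hfin
    exact ⟨w, hw, by rw [hxU, hwe]⟩
  by_contra hcon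
  set U : V → Prop := fun u => height rstar u < height rstar v ∧ level E α rstar u = xU with hU
  set T : V → V → Prop := fun u z => E u z ∧ xU ≤ alphaR α rstar u z with hT
  have hstep : ∀ u z, U u → T u z → U z := by
    intro u z hu hz
    by_contra hzU
    apply hcon
    refine ⟨u, z, hu, hz.1, hzU, hz.2, ?_⟩
    by_contra hlt
    push Not at hlt
    exact hzU ⟨hlt, le_antisymm (hle z hlt) (hz.2.trans (aux_le_in E _ hz.1))⟩
  obtain ⟨W, hW, hWmin⟩ := exists_minimal_of_wellFoundedLT
    (fun S : Finset V => S.Nonempty ∧ (∀ u ∈ S, U u) ∧ ∀ u ∈ S, ∀ z, T u z → z ∈ S)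
    ⟨Finset.univ.filter U, by
      obtain ⟨u, hu⟩ := hne
      refine ⟨⟨u, by simpa using hu⟩, by simp, ?_⟩
      intro a ha z hz
      simp only [Finset.mem_filter, Finset.mem_univ, true_and] at ha ⊢
      exact hstep a z ha hz⟩
  obtain ⟨⟨w0, hw0⟩, hWU, hWT⟩ := hW
  have hdich : (∀ a ∈ W, ∃ u ∈ W, T u a) ∨ (∀ a ∈ W, ∀ z, ¬ T a z) := by
    by_contra hno
    push Not at hno
    obtain ⟨⟨a, ha, hna⟩, b, hb, z, hbz⟩ := hno
    have := hWmin (y := Finset.univ.filter (fun z => ∃ u ∈ W, T u z)) ?_ ?_ ha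
    · simp only [Finset.mem_filter, Finset.mem_univ, true_and] at this
      obtain ⟨u, hu, hua⟩ := this
      exact hna u hu hua
    · refine ⟨⟨z, by simpa using ⟨b, hb, hbz⟩⟩, ?_, ?_⟩
      · intro u hu
        simp only [Finset.mem_filter, Finset.mem_univ, true_and] at hu
        obtain ⟨p, hp, hpu⟩ := hu
        exact hWU u (hWT p hp u hpu)
      · intro u hu q hq
        simp only [Finset.mem_filter, Finset.mem_univ, true_and] at hu ⊢
        obtain ⟨p, hp, hpu⟩ := hu
        exact ⟨u, hWT p hp u hpu, hq⟩
    · intro u hu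
      simp only [Finset.mem_filter, Finset.mem_univ, true_and] at hu
      obtain ⟨p, hp, hpu⟩ := hu
      exact hWT p hp u hpu
  have hsmall : ∀ g : ℝ, ∀ᶠ ε in 𝓝[>] (0:ℝ), 0 < g → ε < g := by
    intro g
    by_cases hg : 0 < g
    · filter_upwards [Ioo_mem_nhdsGT hg] with ε hε _ using hε.2
    · exact Eventually.of_forall (fun _ h => absurd h hg)
  have hev : ∀ᶠ ε in 𝓝[>] (0:ℝ), 0 < ε ∧ (∀ u, 0 < rstar u → ε < rstar u) ∧
      ∀ a z, 0 < (xU - alphaR α rstar a z) / 2 → ε < (xU - alphaR α rstar a z) / 2 := by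
    refine Filter.Eventually.and self_mem_nhdsWithin (Filter.Eventually.and ?_ ?_)
    · rw [eventually_all]
      exact fun u => hsmall _
    · rw [eventually_all]
      intro a
      rw [eventually_all]
      exact fun z => hsmall _
  obtain ⟨ε, hε, hε1, hε2⟩ := hev.exists
  have hpos : ∀ u, U u → 0 < rstar u := by
    intro u hu
    have h1 := hu.1
    have h2 := hr0 v
    simp only [height] at h1
    linarith
  set r' : V → ℝ := fun u => rstar u - if u ∈ W then ε else 0 with hr'
  have hlow : ∀ a b, alphaR α rstar a b - (if b ∈ W then ε else 0) ≤ alphaR α r' a b := by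
    intro a b
    simp only [alphaR, hr']
    have : 0 ≤ (if a ∈ W then ε else 0) := by split_ifs <;> linarith
    linarith
  have hupp : ∀ a b, alphaR α r' a b ≤ alphaR α rstar a b + (if a ∈ W then ε else 0) := by
    intro a b
    simp only [alphaR, hr']
    have : 0 ≤ (if b ∈ W then ε else 0) := by split_ifs <;> linarith
    linarith
  have hsame : ∀ a b, a ∈ W → b ∈ W → alphaR α r' a b = alphaR α rstar a b := by
    intro a b ha hb
    simp only [alphaR, hr', if_pos ha, if_pos hb]
    ring
  have hr'0 : ∀ u, 0 ≤ r' u := by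
    intro u
    simp only [hr']
    split_ifs with h
    · have := hε1 u (hpos u (hWU u h))
      linarith
    · have := hr0 u
      linarith
  have hb' : ∀ a z, E a z → ∃ u, E u a ∧ alphaR α r' a z ≤ alphaR α r' u a := by
    intro a z haz
    by_cases ha : a ∈ W
    · rcases hdich with hd | hd
      · obtain ⟨u, hu, hua⟩ := hd a ha
        refine ⟨u, hua.1, ?_⟩
        rw [hsame u a hu ha]
        refine le_trans ?_ hua.2
        by_cases ht : xU ≤ alphaR α rstar a z
        · have hz := hWT a ha z ⟨haz, ht⟩
          rw [hsame a z ha hz]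
          have h1 := aux_le_in E (alphaR α rstar) haz
          have h2 : inMax E (alphaR α rstar) z = xU := (hWU z hz).2
          linarith
        · have h1 := hupp a z
          rw [if_pos ha] at h1
          have h2 := hε2 a z (by linarith)
          linarith
      · obtain ⟨u, hu, hue⟩ := aux_in_att E (alphaR α rstar) a (hin a)
        refine ⟨u, hu, ?_⟩
        have h0 : inMax E (alphaR α rstar) a = xU := (hWU a ha).2
        have ht : ¬ xU ≤ alphaR α rstar a z := fun h => hd a ha z ⟨haz, h⟩
        have h1 := hupp a z
        have h2 := hε2 a z (by linarith)
        have h3 := hlow u a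
        rw [if_pos ha] at h1 h3
        linarith
    · obtain ⟨u, hu, hue⟩ := hbal a z haz
      refine ⟨u, hu, ?_⟩
      have h1 := hupp a z
      have h2 := hlow u a
      rw [if_neg ha] at h1 h2
      linarith
  have hfinal : rstar w0 ≤ r' w0 :=
    le_of_tendsto' (hrstar σ hσ w0) (fun t => aux_least E hout hin α σ r' hr'0 hb' t w0)
  simp only [hr', if_pos hw0] at hfinal
  linarith
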